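/- The evolved SSBM update (Eq.(9)) inherits global spin-flip equivariance: with the composite interacting update C_i(φ) = ( sin²((π/2)·(√φ_i − Q_i(φ))²) + 1 − sin²((π/2)·(√(1−φ_i) − Q_i(1−φ))²) ) / 2 (where Q_i(φ) = −Σ_{k≠i} J^F_{i,k}(√φ_i − √φ_k) − Σ_{k≠i} J^AF_{i,k}(√φ_i − √(1−φ_k)) and 1−φ is the componentwise complement), and with g(x) = sin(πx/2)², the evolved update E_i(φ) = gⁿ(C_i(φ)) satisfies E_i(1−φ) = 1 − E_i(φ) for every n ≥ 0 and every i. -/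

import Mathlib

/-!
The flip `x ↦ 1 - x` commutes with `g`, since `sin (π/2 - t)² = cos t² = 1 - sin t²`, and hence
with every iterate of `g`. The composite update `C` averages a term with the complement of its
conjugate under `φ ↦ 1 - φ`; as this conjugation is an involution, flipping `φ` swaps the two
terms and turns `C` into `1 - C`, whatever the interaction `Q` is.
-/

open Real

/-- The SSB map `g(x) = sin(πx/2)²`. -/
noncomputable def g : ℝ → ℝ := fun x => Real.sin (π * x / 2) ^ 2

theorem g_one_sub (x : ℝ) : g (1 - x) = 1 - g x := by
  have h : π * (1 - x) / 2 = π / 2 - π * x / 2 := by ring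
  simp only [g]
  rw [h, Real.sin_pi_div_two_sub, Real.cos_sq']

theorem g_iterate_one_sub (n : ℕ) (x : ℝ) : g^[n] (1 - x) = 1 - g^[n] x :=
  (Function.Semiconj.iterate_right (f := fun y : ℝ => 1 - y)
    (fun y => (g_one_sub y).symm) n x).symm

/-- The evolved SSBM update of Eq.(9), `E_i(φ) = g^[n] (C_i(φ))` (the `n`-fold
nested action applied to the composite conjugate-averaged update `C` of
Eq.(8)), inherits global spin-flip equivariance: `E_i(1-φ) = 1 - E_i(φ)` for
every `n ≥ 0` and every `i`. -/
theorem evolved_update_flip_equivariant (m : ℕ) (hm : 1 ≤ m)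
    (JF JAF : Fin m → Fin m → ℝ)
    (φ : Fin m → ℝ) (hφ : ∀ k, φ k ∈ Set.Icc (0:ℝ) 1) :
    let Q : (Fin m → ℝ) → Fin m → ℝ := fun ψ i =>
      (- ∑ k ∈ Finset.univ.erase i, JF i k * (Real.sqrt (ψ i) - Real.sqrt (ψ k)))
      - ∑ k ∈ Finset.univ.erase i, JAF i k * (Real.sqrt (ψ i) - Real.sqrt (1 - ψ k))
    let C : (Fin m → ℝ) → Fin m → ℝ := fun ψ i =>
      (Real.sin (π / 2 * (Real.sqrt (ψ i) - Q ψ i) ^ 2) ^ 2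
        + 1 - Real.sin (π / 2 * (Real.sqrt (1 - ψ i) - Q (fun k => 1 - ψ k) i) ^ 2) ^ 2) / 2
    let E : ℕ → (Fin m → ℝ) → Fin m → ℝ := fun n ψ i => g^[n] (C ψ i)
    ∀ n : ℕ, ∀ i, E n (fun k => 1 - φ k) i = 1 - E n φ i := by
  intro Q C E n i
  -- Complementing twice is the identity, so the flip swaps the two averaged terms of `C`.
  have hC : C (fun k => 1 - φ k) i = 1 - C φ i := by
    simp only [C, sub_sub_cancel]
    ring
  change g^[n] (C (fun k => 1 - φ k) i) = 1 - g^[n] (C φ i)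
  rw [hC, g_iterate_one_sub]
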